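/- In a finite MDP with n states, d0 is boundedly strongly synchronizing in T (i.e., some strategy σ satisfies liminf_{i→∞} M^σ_i(T) > 0) if and only if M^{σ_u}_i(E ∩ T) > 0 for all i ≥ 2^n, where σ_u is the uniform strategy and E is the union of all end-components. -/

import Mathlib

open scoped BigOperators
open Classical Filter

/-- A finite Markov decision process with real transition probabilities. -/
structure MDP (Q A : Type) [Fintype Q] [Fintype A] where
  δ : Q → A → Q → ℝ
  δ_nonneg : ∀ q a q', 0 ≤ δ q a q'
  δ_sum : ∀ q a, ∑ q', δ q a q' = 1

namespace MDP

variable {Q A : Type} [Fintype Q] [Fintype A]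

/-- `d` is a probability distribution. -/
def IsDist (d : Q → ℝ) : Prop := (∀ q, 0 ≤ d q) ∧ ∑ q, d q = 1

/-- A (randomized, history-dependent) strategy maps a history (list of past
state-action pairs) and the current state to a distribution over actions. -/
def IsStrategy (σ : List (Q × A) → Q → A → ℝ) : Prop :=
  (∀ h q a, 0 ≤ σ h q a) ∧ ∀ h q, ∑ a, σ h q a = 1

/-- The probability of the finite path `qs` (with actions `as`) of length `i`,
under strategy `σ` from initial distribution `d0`. -/
noncomputable def pathProb (M : MDP Q A) (σ : List (Q × A) → Q → A → ℝ)
    (d0 : Q → ℝ) (i : ℕ) (qs : Fin (i + 1) → Q) (as : Fin i → A) : ℝ :=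
  d0 (qs 0) * ∏ j : Fin i,
    (σ (List.ofFn (fun k : Fin j.val =>
          (qs ⟨k.val, by have := k.isLt; have := j.isLt; omega⟩,
           as ⟨k.val, by have := k.isLt; have := j.isLt; omega⟩)))
        (qs j.castSucc) (as j))
      * M.δ (qs j.castSucc) (as j) (qs j.succ)

/-- The distribution over states after `i` steps (`M^σ_i`). -/
noncomputable def stepDist (M : MDP Q A) (σ : List (Q × A) → Q → A → ℝ)
    (d0 : Q → ℝ) (i : ℕ) (q : Q) : ℝ :=
  ∑ qs : Fin (i + 1) → Q, ∑ as : Fin i → A,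
    if qs (Fin.last i) = q then M.pathProb σ d0 i qs as else 0

/-- The probability mass that a (sub)distribution assigns to a set `T`. -/
noncomputable def mass (d : Q → ℝ) (T : Set Q) : ℝ := ∑ q, T.indicator d q

/-- The support of a (sub)distribution. -/
def supp {α : Type} (d : α → ℝ) : Set α := {q | 0 < d q}

/-- One-step sure predecessors of `Y`. -/
def Pre (M : MDP Q A) (Y : Set Q) : Set Q :=
  {q | ∃ a, ∀ q', 0 < M.δ q a q' → q' ∈ Y}

/-- Probability of reaching `T` within `i` steps. -/
noncomputable def reachProb (M : MDP Q A) (σ : List (Q × A) → Q → A → ℝ)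
    (d0 : Q → ℝ) (T : Set Q) (i : ℕ) : ℝ :=
  ∑ qs : Fin (i + 1) → Q, ∑ as : Fin i → A,
    if ∃ j, qs j ∈ T then M.pathProb σ d0 i qs as else 0

/-- `d0` is almost-sure winning for the reachability objective `◇T`:
some strategy reaches `T` with probability one. -/
def ASReach (M : MDP Q A) (d0 : Q → ℝ) (T : Set Q) : Prop :=
  ∃ σ, IsStrategy σ ∧ (⨆ i : ℕ, M.reachProb σ d0 T i) = 1

/-- `d0` is limit-sure eventually synchronizing in `T`. -/
def LimitSureEventually (M : MDP Q A) (d0 : Q → ℝ) (T : Set Q) : Prop :=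
  ∀ ε > (0 : ℝ), ∃ σ, IsStrategy σ ∧ ∃ i, 1 - ε ≤ mass (M.stepDist σ d0 i) T

/-- `d0` is almost-sure weakly synchronizing in `T`. -/
def ASWeakly (M : MDP Q A) (d0 : Q → ℝ) (T : Set Q) : Prop :=
  ∃ σ, IsStrategy σ ∧ ∀ ε > (0 : ℝ), {i : ℕ | 1 - ε ≤ mass (M.stepDist σ d0 i) T}.Infinite

/-- `d0` is almost-sure strongly synchronizing in `T`. -/
def ASStrongly (M : MDP Q A) (d0 : Q → ℝ) (T : Set Q) : Prop :=
  ∃ σ, IsStrategy σ ∧ ∀ ε > (0 : ℝ), ∃ N, ∀ i ≥ N, 1 - ε ≤ mass (M.stepDist σ d0 i) T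

/-- The uniform distribution on a set `S`. -/
noncomputable def uniformOn (S : Set Q) : Q → ℝ :=
  fun q => if q ∈ S then 1 / (S.ncard : ℝ) else 0

/-- The uniform strategy, playing all actions uniformly at random. -/
noncomputable def uniformStrategy (Q A : Type) [Fintype A] :
    List (Q × A) → Q → A → ℝ :=
  fun _ _ _ => 1 / (Fintype.card A : ℝ)

/-- Action `a` is allowed in `q` w.r.t. `S` if all its successors stay in `S`. -/
def Allowed (M : MDP Q A) (S : Set Q) (q : Q) (a : A) : Prop :=
  ∀ q', 0 < M.δ q a q' → q' ∈ S

/-- Edge relation within `S` given the allowed actions. -/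
def ECEdge (M : MDP Q A) (S : Set Q) (q q' : Q) : Prop :=
  q ∈ S ∧ q' ∈ S ∧ ∃ a, M.Allowed S q a ∧ 0 < M.δ q a q'

/-- `S` is an end-component: closed and strongly connected via allowed actions. -/
def IsEC (M : MDP Q A) (S : Set Q) : Prop :=
  (∀ q ∈ S, ∃ a, M.Allowed S q a) ∧
  ∀ q ∈ S, ∀ q' ∈ S, Relation.ReflTransGen (M.ECEdge S) q q'

/-- The union of all end-components. -/
def ECUnion (M : MDP Q A) : Set Q := ⋃₀ {S | M.IsEC S}

/-- Positive always synchronizing in `T`. -/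
def PosAlways (M : MDP Q A) (d0 : Q → ℝ) (T : Set Q) : Prop :=
  ∃ σ, IsStrategy σ ∧ ∀ i, 0 < mass (M.stepDist σ d0 i) T

/-- Positive eventually synchronizing in `T`. -/
def PosEvent (M : MDP Q A) (d0 : Q → ℝ) (T : Set Q) : Prop :=
  ∃ σ, IsStrategy σ ∧ ∃ i, 0 < mass (M.stepDist σ d0 i) T

/-- Positive weakly synchronizing in `T`. -/
def PosWeakly (M : MDP Q A) (d0 : Q → ℝ) (T : Set Q) : Prop :=
  ∃ σ, IsStrategy σ ∧ ∀ N, ∃ i ≥ N, 0 < mass (M.stepDist σ d0 i) T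

/-- Positive strongly synchronizing in `T`. -/
def PosStrongly (M : MDP Q A) (d0 : Q → ℝ) (T : Set Q) : Prop :=
  ∃ σ, IsStrategy σ ∧ ∃ N, ∀ i ≥ N, 0 < mass (M.stepDist σ d0 i) T

/-- Bounded always synchronizing in `T`. -/
def BndAlways (M : MDP Q A) (d0 : Q → ℝ) (T : Set Q) : Prop :=
  ∃ σ, IsStrategy σ ∧ ∃ ε > (0 : ℝ), ∀ i, ε < mass (M.stepDist σ d0 i) T

/-- Bounded eventually synchronizing in `T`. -/
def BndEvent (M : MDP Q A) (d0 : Q → ℝ) (T : Set Q) : Prop :=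
  ∃ σ, IsStrategy σ ∧ ∃ ε > (0 : ℝ), ∃ i, ε < mass (M.stepDist σ d0 i) T

/-- Bounded weakly synchronizing in `T`. -/
def BndWeakly (M : MDP Q A) (d0 : Q → ℝ) (T : Set Q) : Prop :=
  ∃ σ, IsStrategy σ ∧ ∃ ε > (0 : ℝ), ∀ N, ∃ i ≥ N, ε < mass (M.stepDist σ d0 i) T

/-- Bounded strongly synchronizing in `T`. -/
def BndStrongly (M : MDP Q A) (d0 : Q → ℝ) (T : Set Q) : Prop :=
  ∃ σ, IsStrategy σ ∧ ∃ ε > (0 : ℝ), ∃ N, ∀ i ≥ N, ε < mass (M.stepDist σ d0 i) T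

end MDP

/-!
Under any strategy, consider the state-action pairs that occur infinitely often in expectation and
the graph of their transitions. A set of states closed under these edges has summable outflow,
hence by conservation of mass summable inflow; so every edge can be retraced and the pairs form
end-components. Therefore the mass outside `E` tends to `0`, and a positive lower bound on the mass
of `T` forces `E ∩ T` to be charged eventually. The uniform strategy has the largest support, and
its supports are the orbit of a self-map of the `2 ^ n` element set `Set Q`: every support after
time `2 ^ n` occurs again arbitrarily late.

Conversely, play uniformly up to some time and from then on uniformly among the actions that stay
in an end-component, which makes every state of `E` recurrent. The supports of the powers of the
resulting stochastic matrix are periodic with period `p = (2 ^ n)!`, and the probability of being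
back at a recurrent state after a multiple of `p` steps is bounded below. For each residue modulo
`p`, a state `x ∈ E ∩ T` charged by the uniform strategy leads by the switching time to a state `y`
from which `x` is hit with probability bounded below at all later times of that residue.
-/

open scoped Nat Matrix

section Iterate

variable {α : Type*} [Fintype α]

theorem iterate_mem_periodicPts_of_card_le (f : α → α) (x : α) {i : ℕ}
    (hi : Fintype.card α ≤ i) : f^[i] x ∈ Function.periodicPts f := by
  obtain ⟨a, b, hne, hab⟩ : ∃ a b : Fin (i + 1), a ≠ b ∧ f^[a] x = f^[b] x :=
    Fintype.exists_ne_map_eq_of_card_lt _ (by simpa using Nat.lt_succ_of_le hi)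
  wlog hlt : a < b generalizing a b
  · exact this b a hne.symm hab.symm (hne.lt_or_gt.resolve_left hlt)
  have hper : Function.IsPeriodicPt f (b - a) (f^[a] x) := by
    rw [Function.IsPeriodicPt, Function.IsFixedPt, ← Function.iterate_add_apply,
      Nat.sub_add_cancel hlt.le, hab]
  rw [← Nat.sub_add_cancel (show (a : ℕ) ≤ i by omega), Function.iterate_add_apply]
  exact Function.mk_mem_periodicPts (Nat.sub_pos_of_lt hlt) (hper.apply_iterate _)

theorem frequently_iterate_eq_of_card_le (f : α → α) (x : α) {i : ℕ}
    (hi : Fintype.card α ≤ i) : ∃ᶠ k in atTop, f^[k] x = f^[i] x := by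
  obtain ⟨d, hd, hper⟩ := iterate_mem_periodicPts_of_card_le f x hi
  refine frequently_atTop.mpr fun N => ⟨N * d + i, by nlinarith, ?_⟩
  rw [Function.iterate_add_apply]
  exact hper.const_mul N

theorem iterate_factorial_card_mul_succ (f : α → α) (x : α) (k : ℕ) :
    f^[(Fintype.card α)! * (k + 1)] x = f^[(Fintype.card α)!] x := by
  have hmem := iterate_mem_periodicPts_of_card_le f x (Nat.self_le_factorial (Fintype.card α))
  rw [mul_add_one, Function.iterate_add_apply]
  exact (Function.isPeriodicPt_factorial_card_of_mem_periodicPts hmem).mul_const k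

end Iterate

theorem lt_liminf_iff_exists_eventually_le {β R : Type*} [ConditionallyCompleteLinearOrder R]
    [DenselyOrdered R] {l : Filter β} [l.NeBot] {f : β → R} {a : R}
    (hlow : l.IsBoundedUnder (· ≥ ·) f) (hup : l.IsBoundedUnder (· ≤ ·) f) :
    a < liminf f l ↔ ∃ c > a, ∀ᶠ i in l, c ≤ f i := by
  constructor
  · intro hlim
    obtain ⟨c, hc, hlt⟩ := exists_between hlim
    exact ⟨c, hc, (eventually_lt_of_lt_liminf hlt hlow).mono fun _ => le_of_lt⟩
  · rintro ⟨c, hc, hle⟩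
    exact hc.trans_le (le_liminf_of_le hup.isCoboundedUnder_ge hle)

theorem exists_gt_eventually_le_of_residues {R : Type*} [LinearOrder R] {f : ℕ → R} {a : R}
    {p : ℕ} (hp : 0 < p) (N : ℕ) (h : ∀ r < p, ∃ c > a, ∀ k, c ≤ f (N + r + p * k)) :
    ∃ c > a, ∀ᶠ i in atTop, c ≤ f i := by
  have : Nonempty R := ⟨a⟩
  choose! c hc hle using h
  obtain ⟨r₀, hr₀, hmin⟩ := (Finset.range p).exists_min_image c ⟨0, Finset.mem_range.mpr hp⟩
  refine ⟨c r₀, hc r₀ (Finset.mem_range.mp hr₀), ?_⟩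
  filter_upwards [eventually_ge_atTop N] with i hi
  have hmod : (i - N) % p < p := Nat.mod_lt _ hp
  have hdecomp : N + (i - N) % p + p * ((i - N) / p) = i := by
    rw [add_assoc, Nat.mod_add_div, Nat.add_sub_cancel' hi]
  simpa only [hdecomp] using
    (hmin _ (Finset.mem_range.mpr hmod)).trans (hle _ hmod ((i - N) / p))

theorem summable_of_add_eq_add {m inflow outflow : ℕ → ℝ} {c : ℝ} (hc : ∀ i, m i ≤ c)
    (hin : ∀ i, 0 ≤ inflow i) (hout : Summable outflow)
    (h : ∀ i, m (i + 1) + outflow i = m i + inflow i) : Summable inflow := by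
  obtain ⟨B, hB⟩ := hout.hasSum.tendsto_sum_nat.bddAbove_range
  refine summable_of_sum_range_le (c := c - m 0 + B) hin fun n => ?_
  calc ∑ i ∈ Finset.range n, inflow i
      = ∑ i ∈ Finset.range n, (m (i + 1) - m i + outflow i) :=
        Finset.sum_congr rfl fun i _ => by linarith [h i]
    _ = m n - m 0 + ∑ i ∈ Finset.range n, outflow i := by
        rw [Finset.sum_add_distrib, Finset.sum_range_sub]
    _ ≤ c - m 0 + B := by linarith [hc n, hB (Set.mem_range_self n)]

theorem reflTransGen_symm_of_forall_mem {α : Type*} {r : α → α → Prop} {s : Set α}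
    (h : ∀ x ∈ s, ∀ y, r x y → y ∈ s ∧ Relation.ReflTransGen r y x) {x y : α} (hx : x ∈ s)
    (hxy : Relation.ReflTransGen r x y) : Relation.ReflTransGen r y x := by
  induction hxy using Relation.ReflTransGen.head_induction_on with
  | refl => exact .refl
  | head hstep _ ih =>
    obtain ⟨hmem, hback⟩ := h _ hx _ hstep
    exact (ih hmem).trans hback

section NonnegMatrix

variable {ι κ R : Type*} [Fintype ι] [Semiring R] [PartialOrder R] [IsStrictOrderedRing R]

theorem dotProduct_pos_iff_of_nonneg {v w : ι → R} (hv : 0 ≤ v) (hw : 0 ≤ w) :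
    0 < v ⬝ᵥ w ↔ ∃ i, 0 < v i ∧ 0 < w i := by
  have hvw (i : ι) : 0 ≤ v i * w i := mul_nonneg (hv i) (hw i)
  have hpos (i : ι) : 0 < v i * w i ↔ 0 < v i ∧ 0 < w i :=
    ⟨fun h => ⟨(hv i).lt_of_ne' (left_ne_zero_of_mul h.ne'),
      (hw i).lt_of_ne' (right_ne_zero_of_mul h.ne')⟩, fun h => mul_pos h.1 h.2⟩
  simp only [dotProduct, Finset.sum_pos_iff_of_nonneg fun i _ => hvw i, Finset.mem_univ,
    true_and, hpos]

theorem vecMul_apply_pos_iff_of_nonneg {v : ι → R} {A : Matrix ι κ R} (hv : 0 ≤ v)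
    (hA : ∀ i j, 0 ≤ A i j) {j : κ} : 0 < (v ᵥ* A) j ↔ ∃ i, 0 < v i ∧ 0 < A i j :=
  dotProduct_pos_iff_of_nonneg hv fun i => hA i j

theorem mul_le_vecMul_apply {v : ι → R} {A : Matrix ι κ R} (hv : 0 ≤ v) (hA : ∀ i j, 0 ≤ A i j)
    (i : ι) (j : κ) : v i * A i j ≤ (v ᵥ* A) j :=
  Finset.single_le_sum (f := fun i => v i * A i j) (fun i _ => mul_nonneg (hv i) (hA i j))
    (Finset.mem_univ i)

variable {P : Matrix ι ι R}

/-- The one-step image of a set of states under the graph of a nonnegative matrix `P`: the states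
that receive positive mass from some state of `S`. -/
def postSet (P : Matrix ι ι R) (S : Set ι) : Set ι := {j | ∃ i ∈ S, 0 < P i j}

variable [DecidableEq ι]

theorem setOf_vecMul_pow_pos (hP : ∀ i j, 0 ≤ P i j) {v : ι → R} (hv : 0 ≤ v) (k : ℕ) :
    {j | 0 < (v ᵥ* P ^ k) j} = (postSet P)^[k] {j | 0 < v j} := by
  induction k with
  | zero => simp
  | succ k ih =>
    have hvk : 0 ≤ v ᵥ* P ^ k := fun j =>
      dotProduct_nonneg_of_nonneg hv fun i => Matrix.pow_apply_nonneg hP k i j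
    rw [Function.iterate_succ_apply', ← ih, pow_succ, ← Matrix.vecMul_vecMul]
    exact Set.ext fun j => vecMul_apply_pos_iff_of_nonneg hvk hP

/-- A common period for the supports of the powers of all nonnegative matrices indexed by `ι`; the
factorial makes it a multiple of every cycle length of a self-map of `Set ι`. -/
def supportPeriod (ι : Type*) [Fintype ι] : ℕ := (Fintype.card (Set ι))!

theorem pow_supportPeriod_mul_succ_pos_iff (hP : ∀ i j, 0 ≤ P i j) (k : ℕ) (i j : ι) :
    0 < (P ^ (supportPeriod ι * (k + 1))) i j ↔ 0 < (P ^ supportPeriod ι) i j := by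
  have hsingle : (0 : ι → R) ≤ Pi.single i 1 := Pi.single_nonneg.mpr zero_le_one
  have hrow (m : ℕ) :
      {j | 0 < (P ^ m) i j} = (postSet P)^[m] {j | 0 < (Pi.single i 1 : ι → R) j} := by
    rw [← setOf_vecMul_pow_pos hP hsingle, Matrix.single_one_vecMul]
    rfl
  have hperiod := iterate_factorial_card_mul_succ (postSet P)
    {j | 0 < (Pi.single i 1 : ι → R) j} k
  rw [← supportPeriod, ← hrow, ← hrow] at hperiod
  exact Set.ext_iff.mp hperiod j

theorem pow_add_apply_pos (hP : ∀ i j, 0 ≤ P i j) {k l : ℕ} {x y z : ι}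
    (hxy : 0 < (P ^ k) x y) (hyz : 0 < (P ^ l) y z) : 0 < (P ^ (k + l)) x z := by
  rw [pow_add]
  exact (mul_pos hxy hyz).trans_le
    (mul_le_vecMul_apply (Matrix.pow_apply_nonneg hP k x) (Matrix.pow_apply_nonneg hP l) y z)

theorem pow_mul_apply_self_pos (hP : ∀ i j, 0 ≤ P i j) {k : ℕ} {x : ι} (hx : 0 < (P ^ k) x x)
    (m : ℕ) : 0 < (P ^ (k * m)) x x := by
  induction m with
  | zero => simp
  | succ m ih => exact pow_add_apply_pos hP ih hx

theorem exists_pow_pos_iff_reflTransGen (hP : ∀ i j, 0 ≤ P i j) {x y : ι} :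
    (∃ k, 0 < (P ^ k) x y) ↔ Relation.ReflTransGen (fun i j => 0 < P i j) x y := by
  constructor
  · rintro ⟨k, hk⟩
    induction k generalizing y with
    | zero =>
      obtain rfl : x = y := by_contra fun hne => by simp [hne] at hk
      exact .refl
    | succ k ih =>
      rw [pow_succ] at hk
      obtain ⟨z, hxz, hzy⟩ :=
        (vecMul_apply_pos_iff_of_nonneg (Matrix.pow_apply_nonneg hP k x) hP).mp hk
      exact (ih hxz).tail hzy
  · intro hxy
    induction hxy with
    | refl => exact ⟨0, by simp⟩
    | tail _ hstep ih =>
      obtain ⟨k, hk⟩ := ih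
      exact ⟨k + 1, pow_add_apply_pos hP hk (by simpa using hstep)⟩

/-- The state `x` is recurrent for the chain with transition matrix `P`, phrased as a condition on
its graph: every state reachable from `x` leads back to `x`. For a finite stochastic `P` this is
equivalent to almost sure return to `x`. -/
def IsRecurrentState (P : Matrix ι ι R) (x : ι) : Prop :=
  ∀ y, Relation.ReflTransGen (fun i j => 0 < P i j) x y →
    Relation.ReflTransGen (fun i j => 0 < P i j) y x

theorem IsRecurrentState.pow_supportPeriod_pos_symm {x y : ι} (hx : IsRecurrentState P x)
    (hP : ∀ i j, 0 ≤ P i j) (hxy : 0 < (P ^ supportPeriod ι) x y) :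
    0 < (P ^ supportPeriod ι) y x := by
  obtain ⟨q, hq⟩ : ∃ q, supportPeriod ι = q + 1 :=
    Nat.exists_eq_succ_of_ne_zero (Nat.factorial_ne_zero _)
  obtain ⟨l, hyx⟩ := (exists_pow_pos_iff_reflTransGen hP).mpr
    (hx y ((exists_pow_pos_iff_reflTransGen hP).mp ⟨_, hxy⟩))
  -- The number of turns round the loop `x → y → x` is chosen so that the period divides the length.
  have hloop : 0 < (P ^ (l + (supportPeriod ι + l) * (2 * q + 1))) y x :=
    pow_add_apply_pos hP hyx (pow_mul_apply_self_pos hP (pow_add_apply_pos hP hxy hyx) _)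
  have hlength : l + (supportPeriod ι + l) * (2 * q + 1) =
      supportPeriod ι * (2 * (l + q) + 1) := by
    rw [hq]
    ring
  rw [hlength] at hloop
  exact (pow_supportPeriod_mul_succ_pos_iff hP _ y x).mp hloop

end NonnegMatrix

section StochasticMatrix

variable {ι R : Type*} [Fintype ι] [DecidableEq ι] [Semiring R]

section PartialOrder

variable [PartialOrder R] [IsStrictOrderedRing R] {P : Matrix ι ι R}

theorem exists_apply_pos_of_mem_rowStochastic (hP : P ∈ Matrix.rowStochastic R ι) (x : ι) :
    ∃ y, 0 < P x y := by
  have hsum : 0 < ∑ y, P x y := by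
    rw [Matrix.sum_row_of_mem_rowStochastic hP]
    exact one_pos
  simpa [Finset.sum_pos_iff_of_nonneg fun y _ => hP.1 x y] using hsum

theorem IsRecurrentState.pow_supportPeriod_apply_self_pos {x : ι} (hx : IsRecurrentState P x)
    (hP : P ∈ Matrix.rowStochastic R ι) : 0 < (P ^ supportPeriod ι) x x := by
  obtain ⟨y, hxy⟩ := exists_apply_pos_of_mem_rowStochastic (pow_mem hP (supportPeriod ι)) x
  have hxx := pow_add_apply_pos hP.1 hxy (hx.pow_supportPeriod_pos_symm hP.1 hxy)
  rw [← mul_two] at hxx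
  exact (pow_supportPeriod_mul_succ_pos_iff hP.1 1 x x).mp hxx

end PartialOrder

variable [LinearOrder R] [IsStrictOrderedRing R] {P : Matrix ι ι R} {x : ι}

namespace IsRecurrentState

theorem exists_forall_le_pow_apply_self (hx : IsRecurrentState P x)
    (hP : P ∈ Matrix.rowStochastic R ι) :
    ∃ c > 0, ∀ k, c ≤ (P ^ (supportPeriod ι * (k + 2))) x x := by
  let S : Finset ι := {y | 0 < (P ^ supportPeriod ι) x y}
  obtain ⟨y₀, hy₀, hmin⟩ := S.exists_min_image (fun y => (P ^ supportPeriod ι) y x)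
    ⟨x, by simpa [S] using hx.pow_supportPeriod_apply_self_pos hP⟩
  refine ⟨(P ^ supportPeriod ι) y₀ x,
    hx.pow_supportPeriod_pos_symm hP.1 (by simpa [S] using hy₀), fun k => ?_⟩
  set c := (P ^ supportPeriod ι) y₀ x
  have hpow : P ^ (supportPeriod ι * (k + 1)) ∈ Matrix.rowStochastic R ι := pow_mem hP _
  calc c = ∑ y, (P ^ (supportPeriod ι * (k + 1))) x y * c := by
        rw [← Finset.sum_mul, Matrix.sum_row_of_mem_rowStochastic hpow, one_mul]
    _ ≤ ∑ y, (P ^ (supportPeriod ι * (k + 1))) x y * (P ^ supportPeriod ι) y x := by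
        refine Finset.sum_le_sum fun y _ => ?_
        rcases (hpow.1 x y).eq_or_lt with hzero | hpos
        · rw [← hzero, zero_mul, zero_mul]
        · have hy : y ∈ S := by
            simpa [S] using (pow_supportPeriod_mul_succ_pos_iff hP.1 k x y).mp hpos
          exact mul_le_mul_of_nonneg_left (hmin y hy) hpos.le
    _ = (P ^ (supportPeriod ι * (k + 2))) x x := by
        rw [← Matrix.mul_apply, ← pow_add, ← mul_add_one, add_assoc, one_add_one_eq_two]

theorem exists_pow_pos_and_forall_le (hx : IsRecurrentState P x)
    (hP : P ∈ Matrix.rowStochastic R ι) {s r : ℕ} (hsr : s + r = supportPeriod ι) :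
    ∃ y, 0 < (P ^ s) x y ∧ ∃ c > 0, ∀ k, c ≤ (P ^ (r + supportPeriod ι * (k + 3))) y x := by
  obtain ⟨y, hxy⟩ := exists_apply_pos_of_mem_rowStochastic (pow_mem hP s) x
  obtain ⟨z, hyz⟩ := exists_apply_pos_of_mem_rowStochastic (pow_mem hP r) y
  have hxz : 0 < (P ^ supportPeriod ι) x z := hsr ▸ pow_add_apply_pos hP.1 hxy hyz
  have hyx := pow_add_apply_pos hP.1 hyz (hx.pow_supportPeriod_pos_symm hP.1 hxz)
  obtain ⟨c, hc, hle⟩ := hx.exists_forall_le_pow_apply_self hP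
  refine ⟨y, hxy, _, mul_pos hyx hc, fun k => ?_⟩
  have hexp : r + supportPeriod ι * (k + 3) =
      r + supportPeriod ι + supportPeriod ι * (k + 2) := by ring
  calc (P ^ (r + supportPeriod ι)) y x * c
      ≤ (P ^ (r + supportPeriod ι)) y x * (P ^ (supportPeriod ι * (k + 2))) x x :=
        mul_le_mul_of_nonneg_left (hle k) hyx.le
    _ ≤ (P ^ (r + supportPeriod ι * (k + 3))) y x := by
        rw [hexp, pow_add P (r + supportPeriod ι)]
        exact mul_le_vecMul_apply (Matrix.pow_apply_nonneg hP.1 _ y)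
          (Matrix.pow_apply_nonneg hP.1 _) x x

end IsRecurrentState

end StochasticMatrix

theorem sum_fin_succ_pi {α R : Type*} [Fintype α] [AddCommMonoid R] {n : ℕ}
    (f : (Fin (n + 1) → α) → R) :
    ∑ x, f x = ∑ x : Fin n → α, ∑ a, f (Fin.snoc x a) := by
  rw [← (Fin.snocEquiv fun _ => α).sum_comp f, Fintype.sum_prod_type, Finset.sum_comm]
  rfl

namespace MDP

variable {Q A : Type}

section Mass

variable [Fintype Q] {d : Q → ℝ}

theorem mass_nonneg (hd : 0 ≤ d) (S : Set Q) : 0 ≤ mass d S :=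
  Finset.sum_nonneg fun q _ => Set.indicator_nonneg (fun q _ => hd q) q

theorem le_mass (hd : 0 ≤ d) {S : Set Q} {q : Q} (hq : q ∈ S) : d q ≤ mass d S := by
  rw [← Set.indicator_of_mem hq d]
  exact Finset.single_le_sum (fun q _ => Set.indicator_nonneg (fun q _ => hd q) q)
    (Finset.mem_univ q)

theorem mass_pos_iff (hd : 0 ≤ d) {S : Set Q} : 0 < mass d S ↔ (supp d ∩ S).Nonempty := by
  constructor
  · intro hpos
    obtain ⟨q, -, hq⟩ := Finset.exists_ne_zero_of_sum_ne_zero hpos.ne'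
    exact ⟨q, (hd q).lt_of_ne' (Set.indicator_apply_ne_zero.mp hq).2,
      (Set.indicator_apply_ne_zero.mp hq).1⟩
  · rintro ⟨q, hpos, hq⟩
    exact lt_of_lt_of_le hpos (le_mass hd hq)

theorem mass_add (d d' : Q → ℝ) (S : Set Q) : mass (d + d') S = mass d S + mass d' S := by
  simp only [mass, Set.indicator_add', Pi.add_apply, Finset.sum_add_distrib]

theorem mass_add_mass_compl (d : Q → ℝ) (S : Set Q) : mass d S + mass d Sᶜ = ∑ q, d q := by
  simp only [mass, ← Finset.sum_add_distrib, Set.indicator_self_add_compl_apply]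

theorem mass_le_sum (hd : 0 ≤ d) (S : Set Q) : mass d S ≤ ∑ q, d q := by
  linarith [mass_add_mass_compl d S, mass_nonneg hd Sᶜ]

theorem mass_le_mass_inter_add_mass_compl (hd : 0 ≤ d) (E T : Set Q) :
    mass d T ≤ mass d (E ∩ T) + mass d Eᶜ := by
  simp only [mass, ← Finset.sum_add_distrib]
  refine Finset.sum_le_sum fun q _ => ?_
  have hq : 0 ≤ d q := hd q
  by_cases hT : q ∈ T <;> by_cases hE : q ∈ E <;> simp [hT, hE, hq]

end Mass

section Path

/-- The list of past state-action pairs along a finite path, in the form in which strategies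
receive it; the current state `qs (Fin.last i)` is not part of it. -/
def history {i : ℕ} (qs : Fin (i + 1) → Q) (as : Fin i → A) : List (Q × A) :=
  List.ofFn fun k : Fin i => (qs k.castSucc, as k)

variable [Fintype Q] [Fintype A] (M : MDP Q A) (σ : List (Q × A) → Q → A → ℝ) (d0 : Q → ℝ)

theorem pathProb_succ (i : ℕ) (qs : Fin (i + 2) → Q) (as : Fin (i + 1) → A) :
    M.pathProb σ d0 (i + 1) qs as = M.pathProb σ d0 i (Fin.init qs) (Fin.init as) *
      σ (history (Fin.init qs) (Fin.init as)) (qs (Fin.last i).castSucc) (as (Fin.last i)) *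
      M.δ (qs (Fin.last i).castSucc) (as (Fin.last i)) (qs (Fin.last (i + 1))) := by
  rw [pathProb, Fin.prod_univ_castSucc, ← mul_assoc, ← mul_assoc]
  rfl

/-- The joint probability under `σ` that the state at time `i` is `q` and the action played there
is `a`. -/
noncomputable def stateActionDist (i : ℕ) (q : Q) (a : A) : ℝ :=
  ∑ qs : Fin (i + 1) → Q, ∑ as : Fin i → A,
    if qs (Fin.last i) = q then M.pathProb σ d0 i qs as * σ (history qs as) q a else 0

theorem stepDist_zero : M.stepDist σ d0 0 = d0 := by
  ext q
  rw [stepDist, ← (Equiv.funUnique (Fin 1) Q).symm.sum_comp]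
  simp [pathProb]

theorem sum_stateActionDist_mul (i : ℕ) (f : Q → A → ℝ) :
    ∑ q, ∑ a, M.stateActionDist σ d0 i q a * f q a =
      ∑ qs : Fin (i + 1) → Q, ∑ as : Fin i → A, ∑ a, M.pathProb σ d0 i qs as *
        σ (history qs as) (qs (Fin.last i)) a * f (qs (Fin.last i)) a := by
  calc ∑ q, ∑ a, M.stateActionDist σ d0 i q a * f q a
      = ∑ x : Q × A, ∑ p : (Fin (i + 1) → Q) × (Fin i → A),
          (if p.1 (Fin.last i) = x.1 then M.pathProb σ d0 i p.1 p.2 * σ (history p.1 p.2) x.1 x.2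
            else 0) * f x.1 x.2 := by
        simp only [Fintype.sum_prod_type, stateActionDist, Finset.sum_mul]
    _ = ∑ qs : Fin (i + 1) → Q, ∑ as : Fin i → A, ∑ a, M.pathProb σ d0 i qs as *
          σ (history qs as) (qs (Fin.last i)) a * f (qs (Fin.last i)) a := by
        rw [Finset.sum_comm, Fintype.sum_prod_type]
        simp only [Fintype.sum_prod_type_right (α₁ := Q), ite_mul, zero_mul, Finset.sum_ite_eq,
          Finset.mem_univ, if_true]

theorem stepDist_succ (i : ℕ) (q' : Q) :
    M.stepDist σ d0 (i + 1) q' = ∑ q, ∑ a, M.stateActionDist σ d0 i q a * M.δ q a q' := by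
  rw [sum_stateActionDist_mul, stepDist, sum_fin_succ_pi]
  refine Finset.sum_congr rfl fun qs _ => ?_
  rw [Finset.sum_comm, sum_fin_succ_pi]
  simp [pathProb_succ]

variable {σ d0}

theorem pathProb_nonneg (hσ : IsStrategy σ) (hd0 : 0 ≤ d0) (i : ℕ) (qs : Fin (i + 1) → Q)
    (as : Fin i → A) : 0 ≤ M.pathProb σ d0 i qs as :=
  mul_nonneg (hd0 _) (Finset.prod_nonneg fun _ _ => mul_nonneg (hσ.1 _ _ _) (M.δ_nonneg _ _ _))

theorem stateActionDist_nonneg (hσ : IsStrategy σ) (hd0 : 0 ≤ d0) (i : ℕ) (q : Q) (a : A) :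
    0 ≤ M.stateActionDist σ d0 i q a := by
  refine Finset.sum_nonneg fun qs _ => Finset.sum_nonneg fun as _ => ?_
  split_ifs
  exacts [mul_nonneg (M.pathProb_nonneg hσ hd0 i qs as) (hσ.1 _ _ _), le_rfl]

theorem sum_stateActionDist (hσ : IsStrategy σ) (i : ℕ) (q : Q) :
    ∑ a, M.stateActionDist σ d0 i q a = M.stepDist σ d0 i q := by
  simp only [stateActionDist, stepDist]
  rw [Finset.sum_comm]
  refine Finset.sum_congr rfl fun qs _ => ?_
  rw [Finset.sum_comm]
  refine Finset.sum_congr rfl fun as _ => ?_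
  split_ifs
  · rw [← Finset.mul_sum, hσ.2, mul_one]
  · exact Finset.sum_const_zero

theorem stepDist_nonneg (hσ : IsStrategy σ) (hd0 : 0 ≤ d0) (i : ℕ) : 0 ≤ M.stepDist σ d0 i :=
  fun q => M.sum_stateActionDist (d0 := d0) hσ i q ▸
    Finset.sum_nonneg fun a _ => M.stateActionDist_nonneg hσ hd0 i q a

theorem sum_stepDist (hσ : IsStrategy σ) (i : ℕ) : ∑ q, M.stepDist σ d0 i q = ∑ q, d0 q := by
  induction i with
  | zero => rw [stepDist_zero]
  | succ i ih =>
    calc ∑ q', M.stepDist σ d0 (i + 1) q'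
        = ∑ q, ∑ a, M.stateActionDist σ d0 i q a * ∑ q', M.δ q a q' := by
          simp only [stepDist_succ, Finset.mul_sum]
          rw [Finset.sum_comm]
          exact Finset.sum_congr rfl fun q _ => Finset.sum_comm
      _ = ∑ q, d0 q := by simp only [M.δ_sum, mul_one, M.sum_stateActionDist hσ, ih]

end Path

section Transience

variable [Fintype Q] [Fintype A] (M : MDP Q A) (σ : List (Q × A) → Q → A → ℝ) (d0 : Q → ℝ)

/-- The probability under `σ` of being in `S` at time `i` and in `D` at time `i + 1`. -/
noncomputable def flow (i : ℕ) (S D : Set Q) : ℝ :=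
  mass (fun q => ∑ a, M.stateActionDist σ d0 i q a * mass (M.δ q a) D) S

/-- The pair `(q, a)` occurs infinitely often in expectation under `σ`. -/
def IsPersistent (q : Q) (a : A) : Prop := ¬ Summable fun i => M.stateActionDist σ d0 i q a

/-- A transition of positive probability out of a state-action pair that occurs infinitely often
in expectation. -/
def PersistentEdge (q q' : Q) : Prop := ∃ a, M.IsPersistent σ d0 q a ∧ 0 < M.δ q a q'

theorem flow_add_flow_compl_left (i : ℕ) (S D : Set Q) :
    M.flow σ d0 i S D + M.flow σ d0 i Sᶜ D = mass (M.stepDist σ d0 (i + 1)) D := by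
  rw [flow, flow, mass_add_mass_compl]
  calc ∑ q, ∑ a, M.stateActionDist σ d0 i q a * mass (M.δ q a) D
      = ∑ q', ∑ q, ∑ a, M.stateActionDist σ d0 i q a * D.indicator (M.δ q a) q' := by
        simp only [mass, Finset.mul_sum]
        symm
        rw [Finset.sum_comm]
        exact Finset.sum_congr rfl fun q _ => Finset.sum_comm
    _ = mass (M.stepDist σ d0 (i + 1)) D := by
        refine Finset.sum_congr rfl fun q' _ => ?_
        by_cases hq' : q' ∈ D <;> simp [hq', stepDist_succ]

variable {σ d0}

theorem flow_add_flow_compl_right (hσ : IsStrategy σ) (i : ℕ) (S D : Set Q) :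
    M.flow σ d0 i S D + M.flow σ d0 i S Dᶜ = mass (M.stepDist σ d0 i) S := by
  rw [flow, flow, ← mass_add]
  congr 1
  ext q
  simp only [Pi.add_apply, ← Finset.sum_add_distrib, ← mul_add, mass_add_mass_compl, M.δ_sum,
    mul_one, M.sum_stateActionDist hσ]

theorem flow_nonneg (hσ : IsStrategy σ) (hd0 : 0 ≤ d0) (i : ℕ) (S D : Set Q) :
    0 ≤ M.flow σ d0 i S D :=
  mass_nonneg (fun q => Finset.sum_nonneg fun a _ =>
    mul_nonneg (M.stateActionDist_nonneg hσ hd0 i q a) (mass_nonneg (M.δ_nonneg q a) D)) S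

theorem stateActionDist_mul_le_flow (hσ : IsStrategy σ) (hd0 : 0 ≤ d0) (i : ℕ) {S D : Set Q}
    {q q' : Q} (a : A) (hq : q ∈ S) (hq' : q' ∈ D) :
    M.stateActionDist σ d0 i q a * M.δ q a q' ≤ M.flow σ d0 i S D := by
  have hterm (q : Q) (a : A) : 0 ≤ M.stateActionDist σ d0 i q a * mass (M.δ q a) D :=
    mul_nonneg (M.stateActionDist_nonneg hσ hd0 i q a) (mass_nonneg (M.δ_nonneg q a) D)
  calc M.stateActionDist σ d0 i q a * M.δ q a q'
      ≤ M.stateActionDist σ d0 i q a * mass (M.δ q a) D :=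
        mul_le_mul_of_nonneg_left (le_mass (M.δ_nonneg q a) hq')
          (M.stateActionDist_nonneg hσ hd0 i q a)
    _ ≤ ∑ b, M.stateActionDist σ d0 i q b * mass (M.δ q b) D :=
        Finset.single_le_sum (f := fun b => M.stateActionDist σ d0 i q b * mass (M.δ q b) D)
          (fun b _ => hterm q b) (Finset.mem_univ a)
    _ ≤ M.flow σ d0 i S D := le_mass (fun q => Finset.sum_nonneg fun b _ => hterm q b) hq

theorem summable_flow_compl_left (hσ : IsStrategy σ) (hd0 : 0 ≤ d0) {D : Set Q}
    (hout : Summable fun i => M.flow σ d0 i D Dᶜ) : Summable fun i => M.flow σ d0 i Dᶜ D := by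
  refine summable_of_add_eq_add (m := fun i => mass (M.stepDist σ d0 i) D)
    (fun i => (mass_le_sum (M.stepDist_nonneg hσ hd0 i) D).trans_eq (M.sum_stepDist hσ i))
    (fun i => M.flow_nonneg hσ hd0 i Dᶜ D) hout fun i => ?_
  linarith [M.flow_add_flow_compl_left σ d0 i D D, M.flow_add_flow_compl_right (d0 := d0) hσ i D D]

theorem summable_flow_compl_right {D : Set Q}
    (hD : ∀ q ∈ D, ∀ q', M.PersistentEdge σ d0 q q' → q' ∈ D) :
    Summable fun i => M.flow σ d0 i D Dᶜ := by
  refine summable_sum fun q _ => ?_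
  by_cases hq : q ∈ D
  swap
  · simpa only [Set.indicator_of_notMem hq] using summable_zero
  simp only [Set.indicator_of_mem hq]
  refine summable_sum fun a _ => ?_
  by_cases hpers : M.IsPersistent σ d0 q a
  · have hzero : mass (M.δ q a) Dᶜ = 0 := by
      refine ((mass_nonneg (M.δ_nonneg q a) _).eq_of_not_lt ?_).symm
      rw [mass_pos_iff (M.δ_nonneg q a)]
      exact fun ⟨q', hpos, hq'⟩ => hq' (hD q hq q' ⟨a, hpers, hpos⟩)
    simpa only [hzero, mul_zero] using summable_zero
  · exact (not_not.mp hpers).mul_right _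

variable {M} in
theorem PersistentEdge.reflTransGen_symm (hσ : IsStrategy σ) (hd0 : 0 ≤ d0) {q q' : Q}
    (h : M.PersistentEdge σ d0 q q') : Relation.ReflTransGen (M.PersistentEdge σ d0) q' q := by
  obtain ⟨a, hpers, hpos⟩ := h
  by_contra hq
  let D : Set Q := {y | Relation.ReflTransGen (M.PersistentEdge σ d0) q' y}
  have hinflow : Summable fun i => M.flow σ d0 i Dᶜ D :=
    M.summable_flow_compl_left hσ hd0 (M.summable_flow_compl_right fun _ hy _ => hy.tail)
  refine hpers ((summable_mul_right_iff hpos.ne').mp (.of_nonneg_of_le (fun i => ?_)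
    (fun i => M.stateActionDist_mul_le_flow hσ hd0 i (q' := q') a hq .refl) hinflow))
  exact mul_nonneg (M.stateActionDist_nonneg hσ hd0 i q a) hpos.le

theorem isEC_setOf_reflTransGen_persistentEdge (hσ : IsStrategy σ) (hd0 : 0 ≤ d0) {q : Q} {a : A}
    (ha : M.IsPersistent σ d0 q a) :
    M.IsEC {q' | Relation.ReflTransGen (M.PersistentEdge σ d0) q q'} := by
  set S := {q' | Relation.ReflTransGen (M.PersistentEdge σ d0) q q'}
  have hallowed {y : Q} (hy : y ∈ S) {b : A} (hb : M.IsPersistent σ d0 y b) : M.Allowed S y b :=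
    fun z hz => hy.tail ⟨b, hb, hz⟩
  have hback {y : Q} (hy : y ∈ S) : Relation.ReflTransGen (M.PersistentEdge σ d0) y q :=
    reflTransGen_symm_of_forall_mem (s := Set.univ)
      (fun _ _ _ h => ⟨trivial, h.reflTransGen_symm hσ hd0⟩) trivial hy
  constructor
  · intro y hy
    rcases (hback hy).cases_head with rfl | ⟨z, ⟨b, hb, -⟩, -⟩
    exacts [⟨a, hallowed hy ha⟩, ⟨b, hallowed hy hb⟩]
  · intro y hy z hz
    have hyz := (hback hy).trans hz
    clear hz
    induction hyz using Relation.ReflTransGen.head_induction_on with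
    | refl => exact .refl
    | head hstep _ ih =>
      have hmem := hy.tail hstep
      obtain ⟨b, hb, hpos⟩ := hstep
      exact (ih hmem).head ⟨hy, hmem, b, hallowed hy hb, hpos⟩

theorem summable_stepDist_of_notMem_ECUnion (hσ : IsStrategy σ) (hd0 : 0 ≤ d0) {q : Q}
    (hq : q ∉ M.ECUnion) : Summable fun i => M.stepDist σ d0 i q := by
  simp only [← M.sum_stateActionDist hσ]
  refine summable_sum fun a _ => by_contra fun ha => hq ?_
  exact ⟨_, M.isEC_setOf_reflTransGen_persistentEdge hσ hd0 ha, .refl⟩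

theorem tendsto_mass_compl_ECUnion (hσ : IsStrategy σ) (hd0 : 0 ≤ d0) :
    Tendsto (fun i => mass (M.stepDist σ d0 i) M.ECUnionᶜ) atTop (nhds 0) := by
  refine Summable.tendsto_atTop_zero (summable_sum fun q _ => ?_)
  by_cases hq : q ∈ M.ECUnion
  · simp [hq]
  · simpa [hq] using M.summable_stepDist_of_notMem_ECUnion hσ hd0 hq

end Transience

section MemorylessPolicy

theorem uniformOn_nonneg (S : Set Q) : 0 ≤ uniformOn S := by
  intro q
  rw [uniformOn]
  split_ifs <;> simp

theorem uniformOn_pos_iff [Finite Q] {S : Set Q} {q : Q} : 0 < uniformOn S q ↔ q ∈ S := by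
  by_cases hq : q ∈ S
  · have hcard : 0 < S.ncard := (Set.ncard_pos S.toFinite).mpr ⟨q, hq⟩
    simp [uniformOn, hq, hcard]
  · simp [uniformOn, hq]

theorem isDist_uniformOn [Fintype Q] {S : Set Q} (hS : S.Nonempty) : IsDist (uniformOn S) := by
  have hcard : (S.ncard : ℝ) ≠ 0 :=
    Nat.cast_ne_zero.mpr ((Set.ncard_pos S.toFinite).mpr hS).ne'
  refine ⟨uniformOn_nonneg S, ?_⟩
  simp only [uniformOn, ← Finset.sum_filter, Finset.sum_const, nsmul_eq_mul]
  rw [← Set.ncard_coe_finset]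
  simpa using mul_inv_cancel₀ hcard

variable [Fintype A]

/-- The strategy that plays the memoryless policy `κ i` at time `i`; the time is read off the
history as its length. -/
def markovStrategy (κ : ℕ → Q → A → ℝ) : List (Q × A) → Q → A → ℝ := fun h => κ h.length

theorem isStrategy_markovStrategy {κ : ℕ → Q → A → ℝ} (hκ : ∀ i q, IsDist (κ i q)) :
    IsStrategy (markovStrategy κ) :=
  ⟨fun h q => (hκ h.length q).1, fun h q => (hκ h.length q).2⟩

/-- The strategy that plays the memoryless policy `π` before time `L` and `ρ` from time `L` on. -/
def switchStrategy (L : ℕ) (π ρ : Q → A → ℝ) : List (Q × A) → Q → A → ℝ :=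
  markovStrategy fun i => if i < L then π else ρ

theorem isStrategy_switchStrategy (L : ℕ) {π ρ : Q → A → ℝ} (hπ : ∀ q, IsDist (π q))
    (hρ : ∀ q, IsDist (ρ q)) : IsStrategy (switchStrategy L π ρ) :=
  isStrategy_markovStrategy fun i q => by
    split_ifs
    exacts [hπ q, hρ q]

theorem uniformStrategy_eq_markovStrategy :
    uniformStrategy Q A = markovStrategy fun _ _ => uniformOn Set.univ := by
  ext
  simp [uniformStrategy, markovStrategy, uniformOn, Set.ncard_univ]

theorem isStrategy_uniformStrategy [Nonempty A] : IsStrategy (uniformStrategy Q A) := by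
  rw [uniformStrategy_eq_markovStrategy]
  exact isStrategy_markovStrategy fun _ _ => isDist_uniformOn Set.univ_nonempty

end MemorylessPolicy

section Markov

variable [Fintype Q] [Fintype A] (M : MDP Q A) (d0 : Q → ℝ)

/-- The transition matrix of the Markov chain that `M` becomes when actions are drawn from the
memoryless policy `π`. -/
noncomputable def kernel (π : Q → A → ℝ) : Matrix Q Q ℝ :=
  Matrix.of fun q => π q ᵥ* Matrix.of (M.δ q)

variable {π : Q → A → ℝ}

theorem kernel_nonneg (hπ : 0 ≤ π) (q q' : Q) : 0 ≤ M.kernel π q q' :=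
  dotProduct_nonneg_of_nonneg (hπ q) fun a => M.δ_nonneg q a q'

theorem kernel_pos_iff (hπ : 0 ≤ π) {q q' : Q} :
    0 < M.kernel π q q' ↔ ∃ a, 0 < π q a ∧ 0 < M.δ q a q' :=
  vecMul_apply_pos_iff_of_nonneg (hπ q) (M.δ_nonneg q)

theorem kernel_mem_rowStochastic (hπ : ∀ q, IsDist (π q)) :
    M.kernel π ∈ Matrix.rowStochastic ℝ Q := by
  refine Matrix.mem_rowStochastic_iff_sum.mpr
    ⟨M.kernel_nonneg fun q => (hπ q).1, fun q => ?_⟩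
  simp only [kernel, Matrix.of_apply, Matrix.vecMul, dotProduct]
  rw [Finset.sum_comm]
  simp only [← Finset.mul_sum, M.δ_sum, mul_one, (hπ q).2]

theorem stateActionDist_markovStrategy (κ : ℕ → Q → A → ℝ) (i : ℕ) (q : Q) (a : A) :
    M.stateActionDist (markovStrategy κ) d0 i q a =
      M.stepDist (markovStrategy κ) d0 i q * κ i q a := by
  simp only [stateActionDist, stepDist, markovStrategy, history, List.length_ofFn, Finset.sum_mul,
    ite_mul, zero_mul]

theorem stepDist_markovStrategy_succ (κ : ℕ → Q → A → ℝ) (i : ℕ) :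
    M.stepDist (markovStrategy κ) d0 (i + 1) =
      M.stepDist (markovStrategy κ) d0 i ᵥ* M.kernel (κ i) := by
  ext q'
  simp only [stepDist_succ, stateActionDist_markovStrategy, mul_assoc, ← Finset.mul_sum]
  rfl

theorem stepDist_markovStrategy_add {κ : ℕ → Q → A → ℝ} {L m : ℕ} (h : ∀ j < m, κ (L + j) = π) :
    M.stepDist (markovStrategy κ) d0 (L + m) =
      M.stepDist (markovStrategy κ) d0 L ᵥ* M.kernel π ^ m := by
  induction m with
  | zero => simp
  | succ m ih =>
    rw [← add_assoc, stepDist_markovStrategy_succ, h m m.lt_succ_self,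
      ih fun j hj => h j (hj.trans m.lt_succ_self), Matrix.vecMul_vecMul, pow_succ]

theorem stepDist_markovStrategy_const (π : Q → A → ℝ) (i : ℕ) :
    M.stepDist (markovStrategy fun _ => π) d0 i = d0 ᵥ* M.kernel π ^ i := by
  simpa only [zero_add, stepDist_zero] using
    M.stepDist_markovStrategy_add d0 (κ := fun _ => π) (L := 0) (m := i) fun _ _ => rfl

theorem stepDist_switchStrategy_add (L m : ℕ) (π ρ : Q → A → ℝ) :
    M.stepDist (switchStrategy L π ρ) d0 (L + m) =
      M.stepDist (markovStrategy fun _ => π) d0 L ᵥ* M.kernel ρ ^ m := by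
  have hbefore : M.stepDist (switchStrategy L π ρ) d0 (0 + L) =
      M.stepDist (switchStrategy L π ρ) d0 0 ᵥ* M.kernel π ^ L :=
    M.stepDist_markovStrategy_add d0 fun j hj => by simp [hj]
  rw [zero_add, stepDist_zero] at hbefore
  rw [stepDist_markovStrategy_const, ← hbefore]
  exact M.stepDist_markovStrategy_add d0 fun j _ => by simp

end Markov

section UniformStrategy

variable [Fintype Q] [Fintype A] (M : MDP Q A) {σ : List (Q × A) → Q → A → ℝ} {d0 : Q → ℝ}

theorem supp_stepDist_uniformStrategy (hd0 : 0 ≤ d0) (i : ℕ) :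
    supp (M.stepDist (uniformStrategy Q A) d0 i) =
      (postSet (M.kernel fun _ => uniformOn Set.univ))^[i] (supp d0) := by
  rw [uniformStrategy_eq_markovStrategy, stepDist_markovStrategy_const]
  exact setOf_vecMul_pow_pos (M.kernel_nonneg fun _ => uniformOn_nonneg Set.univ) hd0 i

theorem supp_stepDist_subset_uniformStrategy (hσ : IsStrategy σ) (hd0 : 0 ≤ d0) (i : ℕ) :
    supp (M.stepDist σ d0 i) ⊆ supp (M.stepDist (uniformStrategy Q A) d0 i) := by
  induction i with
  | zero => simp only [stepDist_zero, subset_rfl]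
  | succ i ih =>
    intro q' hq'
    have hsad := M.stateActionDist_nonneg hσ hd0 i
    obtain ⟨q, -, hq⟩ : ∃ q ∈ Finset.univ, 0 < ∑ a, M.stateActionDist σ d0 i q a * M.δ q a q' :=
      (Finset.sum_pos_iff_of_nonneg fun q _ => dotProduct_nonneg_of_nonneg (hsad q) fun a =>
        M.δ_nonneg q a q').mp (M.stepDist_succ σ d0 i q' ▸ hq')
    obtain ⟨a, ha, hδ⟩ :=
      (dotProduct_pos_iff_of_nonneg (hsad q) fun a => M.δ_nonneg q a q').mp hq
    have hstep : 0 < M.stepDist σ d0 i q := by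
      rw [← M.sum_stateActionDist hσ]
      exact ha.trans_le (Finset.single_le_sum (fun b _ => hsad q b) (Finset.mem_univ a))
    rw [supp_stepDist_uniformStrategy M hd0, Function.iterate_succ_apply',
      ← supp_stepDist_uniformStrategy M hd0]
    exact ⟨q, ih hstep, (M.kernel_pos_iff fun _ => uniformOn_nonneg Set.univ).mpr
      ⟨a, uniformOn_pos_iff.mpr trivial, hδ⟩⟩

end UniformStrategy

section StayPolicy

variable [Fintype Q] [Fintype A] (M : MDP Q A)

/-- The actions allowed at `q` in some end-component through `q`; all actions if there is none. -/
def stayActions (q : Q) : Set A :=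
  {a | q ∈ M.ECUnion → ∃ S, M.IsEC S ∧ q ∈ S ∧ M.Allowed S q a}

/-- The memoryless policy that plays uniformly among the actions of `stayActions`; under it the
union of the end-components is never left. -/
noncomputable def stayPolicy (q : Q) : A → ℝ := uniformOn (M.stayActions q)

theorem stayActions_nonempty [Nonempty A] (q : Q) : (M.stayActions q).Nonempty := by
  by_cases hq : q ∈ M.ECUnion
  · obtain ⟨S, hS, hqS⟩ := hq
    obtain ⟨a, ha⟩ := hS.1 q hqS
    exact ⟨a, fun _ => ⟨S, hS, hqS, ha⟩⟩
  · exact ⟨Classical.arbitrary A, fun h => absurd h hq⟩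

theorem isDist_stayPolicy [Nonempty A] (q : Q) : IsDist (M.stayPolicy q) :=
  isDist_uniformOn (M.stayActions_nonempty q)

theorem kernel_stayPolicy_pos_iff {q q' : Q} :
    0 < M.kernel M.stayPolicy q q' ↔ ∃ a ∈ M.stayActions q, 0 < M.δ q a q' := by
  simp only [M.kernel_pos_iff (π := M.stayPolicy) fun _ => uniformOn_nonneg _, stayPolicy,
    uniformOn_pos_iff]

theorem ECEdge.kernel_stayPolicy_pos {M : MDP Q A} {S : Set Q} {q q' : Q} (h : M.ECEdge S q q')
    (hS : M.IsEC S) : 0 < M.kernel M.stayPolicy q q' := by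
  obtain ⟨hq, -, a, ha, hpos⟩ := h
  exact M.kernel_stayPolicy_pos_iff.mpr ⟨a, fun _ => ⟨S, hS, hq, ha⟩, hpos⟩

theorem isRecurrentState_kernel_stayPolicy {q : Q} (hq : q ∈ M.ECUnion) :
    IsRecurrentState (M.kernel M.stayPolicy) q := by
  refine fun _ => reflTransGen_symm_of_forall_mem (s := M.ECUnion) (fun x hx y hxy => ?_) hq
  obtain ⟨a, ha, hpos⟩ := M.kernel_stayPolicy_pos_iff.mp hxy
  obtain ⟨S, hS, hxS, hallowed⟩ := ha hx
  have hyS : y ∈ S := hallowed y hpos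
  have hedge : M.ECEdge S ≤ fun i j => 0 < M.kernel M.stayPolicy i j :=
    fun _ _ h => h.kernel_stayPolicy_pos hS
  exact ⟨⟨S, hS, hyS⟩, Relation.ReflTransGen.mono hedge _ _ (hS.2 y hyS x hxS)⟩

end StayPolicy

section BoundedStrongSynchronization

variable [Fintype Q] [Fintype A] (M : MDP Q A) {σ : List (Q × A) → Q → A → ℝ} {d0 : Q → ℝ}
  {T : Set Q}

theorem liminf_mass_stepDist_pos_iff (hσ : IsStrategy σ) (hd0 : 0 ≤ d0) :
    0 < liminf (fun i => mass (M.stepDist σ d0 i) T) atTop ↔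
      ∃ c > 0, ∀ᶠ i in atTop, c ≤ mass (M.stepDist σ d0 i) T :=
  lt_liminf_iff_exists_eventually_le
    (isBoundedUnder_of ⟨0, fun i => mass_nonneg (M.stepDist_nonneg hσ hd0 i) T⟩)
    (isBoundedUnder_of ⟨∑ q, d0 q, fun i =>
      (mass_le_sum (M.stepDist_nonneg hσ hd0 i) T).trans_eq (M.sum_stepDist hσ i)⟩)

theorem eventually_mass_inter_ECUnion_pos (hσ : IsStrategy σ) (hd0 : 0 ≤ d0) {c : ℝ} (hc : 0 < c)
    (h : ∀ᶠ i in atTop, c ≤ mass (M.stepDist σ d0 i) T) :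
    ∀ᶠ i in atTop, 0 < mass (M.stepDist σ d0 i) (M.ECUnion ∩ T) := by
  filter_upwards [h, (M.tendsto_mass_compl_ECUnion hσ hd0).eventually_lt_const hc] with i hle hlt
  linarith [mass_le_mass_inter_add_mass_compl (M.stepDist_nonneg hσ hd0 i) M.ECUnion T]

theorem supp_stepDist_uniformStrategy_inter_nonempty (hd0 : 0 ≤ d0)
    (h : ∀ᶠ i in atTop, (supp (M.stepDist (uniformStrategy Q A) d0 i) ∩ T).Nonempty) {i : ℕ}
    (hi : 2 ^ Fintype.card Q ≤ i) :
    (supp (M.stepDist (uniformStrategy Q A) d0 i) ∩ T).Nonempty := by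
  simp only [M.supp_stepDist_uniformStrategy hd0] at h ⊢
  have hrecur := frequently_iterate_eq_of_card_le
    (postSet (M.kernel fun _ => uniformOn Set.univ)) (supp d0) (Fintype.card_set.trans_le hi)
  obtain ⟨k, hk, hT⟩ := (hrecur.and_eventually h).exists
  rwa [hk] at hT

variable [Nonempty A]

theorem mass_inter_ECUnion_pos_of_two_pow_card_le (hσ : IsStrategy σ) (hd0 : 0 ≤ d0) {c : ℝ}
    (hc : 0 < c) (h : ∀ᶠ i in atTop, c ≤ mass (M.stepDist σ d0 i) T) {i : ℕ}
    (hi : 2 ^ Fintype.card Q ≤ i) :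
    0 < mass (M.stepDist (uniformStrategy Q A) d0 i) (M.ECUnion ∩ T) := by
  rw [mass_pos_iff (M.stepDist_nonneg isStrategy_uniformStrategy hd0 i)]
  refine M.supp_stepDist_uniformStrategy_inter_nonempty hd0 ?_ hi
  filter_upwards [M.eventually_mass_inter_ECUnion_pos hσ hd0 hc h] with k hk
  exact ((mass_pos_iff (M.stepDist_nonneg hσ hd0 k)).mp hk).mono
    (Set.inter_subset_inter_left _ (M.supp_stepDist_subset_uniformStrategy hσ hd0 k))

theorem stepDist_uniformStrategy_add_pos (hd0 : 0 ≤ d0) {π : Q → A → ℝ}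
    (hπ : ∀ q, IsDist (π q)) {i m : ℕ} {x y : Q}
    (hx : 0 < M.stepDist (uniformStrategy Q A) d0 i x) (hxy : 0 < (M.kernel π ^ m) x y) :
    0 < M.stepDist (uniformStrategy Q A) d0 (i + m) y := by
  have hσ : IsStrategy (switchStrategy i (fun _ => uniformOn Set.univ) π : List (Q × A) → _) :=
    isStrategy_switchStrategy i (fun _ => isDist_uniformOn Set.univ_nonempty) hπ
  refine M.supp_stepDist_subset_uniformStrategy hσ hd0 (i + m) ?_
  refine (mul_pos hx hxy).trans_le ?_
  rw [stepDist_switchStrategy_add, ← uniformStrategy_eq_markovStrategy]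
  exact mul_le_vecMul_apply (M.stepDist_nonneg isStrategy_uniformStrategy hd0 i)
    (Matrix.pow_apply_nonneg (M.kernel_nonneg fun q => (hπ q).1) m) x y

theorem exists_pos_forall_le_mass_switchStrategy (hd0 : 0 ≤ d0) {N r : ℕ}
    (hr : r ≤ supportPeriod Q)
    (h : 0 < mass (M.stepDist (uniformStrategy Q A) d0 (N + r)) (M.ECUnion ∩ T)) :
    ∃ c > 0, ∀ k, c ≤ mass (M.stepDist (switchStrategy (N + supportPeriod Q)
      (fun _ => uniformOn Set.univ) M.stayPolicy) d0
      (N + 4 * supportPeriod Q + r + supportPeriod Q * k)) T := by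
  set p := supportPeriod Q
  have hunif := M.stepDist_nonneg (isStrategy_uniformStrategy (Q := Q) (A := A)) hd0
  have hstay := M.kernel_mem_rowStochastic M.isDist_stayPolicy
  obtain ⟨x, hx, hxE, hxT⟩ := (mass_pos_iff (hunif _)).mp h
  obtain ⟨y, hxy, c, hc, hyx⟩ :=
    (M.isRecurrentState_kernel_stayPolicy hxE).exists_pow_pos_and_forall_le hstay
      (Nat.sub_add_cancel hr)
  have hy : 0 < M.stepDist (uniformStrategy Q A) d0 (N + p) y := by
    simpa only [add_assoc, p, Nat.add_sub_cancel' hr] using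
      M.stepDist_uniformStrategy_add_pos hd0 M.isDist_stayPolicy hx hxy
  refine ⟨_, mul_pos hy hc, fun k => ?_⟩
  have htime : N + 4 * p + r + p * k = N + p + (r + p * (k + 3)) := by ring
  have hσ := isStrategy_switchStrategy (Q := Q) (A := A) (N + p)
    (fun _ => isDist_uniformOn Set.univ_nonempty) M.isDist_stayPolicy
  refine le_trans ?_ (le_mass (M.stepDist_nonneg hσ hd0 _) hxT)
  rw [htime, stepDist_switchStrategy_add, ← uniformStrategy_eq_markovStrategy]
  exact (mul_le_mul_of_nonneg_left (hyx k) hy.le).trans (mul_le_vecMul_apply (hunif _)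
    (Matrix.pow_apply_nonneg hstay.1 _) y x)

theorem exists_isStrategy_eventually_le_mass (hd0 : 0 ≤ d0) {N : ℕ}
    (h : ∀ i ≥ N, 0 < mass (M.stepDist (uniformStrategy Q A) d0 i) (M.ECUnion ∩ T)) :
    ∃ σ, IsStrategy σ ∧ ∃ c > 0, ∀ᶠ i in atTop, c ≤ mass (M.stepDist σ d0 i) T :=
  ⟨switchStrategy (N + supportPeriod Q) (fun _ => uniformOn Set.univ) M.stayPolicy,
    isStrategy_switchStrategy _ (fun _ => isDist_uniformOn Set.univ_nonempty) M.isDist_stayPolicy,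
    exists_gt_eventually_le_of_residues (Nat.factorial_pos _) (N + 4 * supportPeriod Q)
      fun r hr => M.exists_pos_forall_le_mass_switchStrategy hd0 hr.le (h (N + r) (by omega))⟩

end BoundedStrongSynchronization

end MDP

open MDP in
/-- `d0` is boundedly strongly synchronizing in `T` (some strategy has
`liminf_i M^σ_i(T) > 0`) iff `M^{σ_u}_i(E ∩ T) > 0` for all `i ≥ 2^n`. -/
theorem stmt13 {Q A : Type} [Fintype Q] [Fintype A] [Nonempty A] (M : MDP Q A)
    (d0 : Q → ℝ) (hd0 : IsDist d0) (T : Set Q) :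
    (∃ σ, IsStrategy σ ∧
        0 < Filter.liminf (fun i : ℕ => mass (M.stepDist σ d0 i) T) Filter.atTop) ↔
      ∀ i ≥ 2 ^ Fintype.card Q,
        0 < mass (M.stepDist (uniformStrategy Q A) d0 i) (M.ECUnion ∩ T) := by
  constructor
  · rintro ⟨σ, hσ, hlim⟩ i hi
    obtain ⟨c, hc, hle⟩ := (M.liminf_mass_stepDist_pos_iff hσ hd0.1).mp hlim
    exact M.mass_inter_ECUnion_pos_of_two_pow_card_le hσ hd0.1 hc hle hi
  · intro h
    obtain ⟨σ, hσ, hle⟩ := M.exists_isStrategy_eventually_le_mass hd0.1 h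
    exact ⟨σ, hσ, (M.liminf_mass_stepDist_pos_iff hσ hd0.1).mpr hle⟩
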